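/- arXiv:2203.15742 — 2 statements merged into one kernel-verified Lean document; each statement's English description precedes it below -/
import Mathlib

section
/- For all integers s and t with 0 ≤ s ≤ t and t ≥ 1, the complete bipartite graph K_{s,t} has hopping throttling number th_H(K_{s,t}) = ⌈2·√t + s − 1⌉. -/
/-! In `K_{s,t}`, a vertex can force only when the opposite part is entirely blue, so a forcing
set `B` must contain one of the two parts (`not_univ_of_reach`). While a part `W` is not yet
blue, only vertices of `W` can force. Each force uses up one active (blue, not yet used) vertex
of `W` and creates at most one, so at most `|B ∩ W|` vertices of `W` turn blue per round and
`|W| ≤ |B ∩ W| (1 + p)` after `p` rounds (`card_le_of_reach`). By AM-GM this gives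
`2√|W| ≤ |B ∩ W| + 1 + p`, which is the lower bound when `W` is the part of size `t`; when `B`
contains that part, the bound obtained for the part of size `s` is at least as large, because
`x ↦ x - 2√x` is monotone on `[1, ∞)`.

For the upper bound, with `n = ⌈2√t⌉`, take as `B` the part of size `s` and `k = ⌊n/2⌋` vertices
of the other part, and let vertex `i` of that part force vertex `i + k`. Then `n - k - 1` rounds
suffice, since `k (n - k) = ⌊n²/4⌋ ≥ t` (`reach_chainState`). -/


namespace Hopping

variable {V : Type*} [DecidableEq V]

/-- One round of simultaneous hopping forces.  A state is a pair `(blue, used)`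
consisting of the set of blue vertices and the set of vertices that have already
performed a force.  In one round, a collection `F` of forces `(v, w)` is
performed simultaneously: each forcing vertex `v` is blue, has not yet performed
a force, and has all of its neighbors blue; each forced vertex `w` is white;
distinct forces have distinct forcing vertices and distinct forced vertices. -/
def Round (G : SimpleGraph V) (S T : Finset V × Finset V) : Prop :=
  ∃ F : Finset (V × V),
    (∀ p ∈ F, p.1 ∈ S.1 ∧ p.1 ∉ S.2 ∧ (∀ w, G.Adj p.1 w → w ∈ S.1) ∧ p.2 ∉ S.1) ∧
    (∀ p ∈ F, ∀ q ∈ F, p ≠ q → p.1 ≠ q.1 ∧ p.2 ≠ q.2) ∧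
    T.1 = S.1 ∪ F.image Prod.snd ∧ T.2 = S.2 ∪ F.image Prod.fst

/-- `Reach G t S T` means that state `T` is reachable from state `S` in exactly
`t` rounds of simultaneous hopping forces. -/
def Reach (G : SimpleGraph V) : ℕ → Finset V × Finset V → Finset V × Finset V → Prop
  | 0, S, T => S = T
  | t + 1, S, T => ∃ U, Round G S U ∧ Reach G t U T

variable [Fintype V]

/-- `B` is a hopping forcing set of `G`: starting with exactly the vertices of
`B` blue (and no vertex having performed a force), some sequence of hopping
forces colors every vertex blue. -/
def IsForcingSet (G : SimpleGraph V) (B : Finset V) : Prop :=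
  ∃ t T, Reach G t (B, ∅) T ∧ T.1 = Finset.univ

/-- The hopping forcing number `H(G)`: the minimum size of a hopping forcing set. -/
noncomputable def forcingNumber (G : SimpleGraph V) : ℕ :=
  sInf {k | ∃ B : Finset V, B.card = k ∧ IsForcingSet G B}

/-- The hopping propagation time `pt_H(G; B)`: the least number of rounds of
simultaneous hopping forces needed to color every vertex blue starting from `B`,
or `∞` if `B` is not a hopping forcing set. -/
noncomputable def propTime (G : SimpleGraph V) (B : Finset V) : ℕ∞ :=
  sInf {t : ℕ∞ | ∃ t' : ℕ, t = (t' : ℕ∞) ∧ ∃ T, Reach G t' (B, ∅) T ∧ T.1 = Finset.univ}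

/-- The hopping throttling number `th_H(G) = min_B (|B| + pt_H(G;B))`. -/
noncomputable def throttling (G : SimpleGraph V) : ℕ∞ :=
  ⨅ B : Finset V, ((B.card : ℕ∞) + propTime G B)

end Hopping


namespace Hopping

/-! ### Counting forces -/

section General

variable {V : Type*} [DecidableEq V] {G : SimpleGraph V}

/-- If every vertex outside `W` is adjacent to all of `W`, then from a state reaching all blue
in `n` rounds, the size of `W` is at most the number of blue vertices in `W` plus `n` times the
number of active (blue and unused) ones in `W`: the number of active vertices of `W` cannot grow as long
as `W` is not entirely blue. -/
lemma card_le_of_reach {W : Finset V} (hW : ∀ v, v ∉ W → ∀ w ∈ W, G.Adj v w) (n : ℕ) :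
    ∀ S T : Finset V × Finset V, Reach G n S T → W ⊆ T.1 →
      W.card ≤ (S.1 ∩ W).card + n * ((S.1 ∩ W) \ S.2).card := by
  induction n with
  | zero =>
    rintro S T rfl h
    rw [Finset.inter_eq_right.2 h]
    omega
  | succ n ih =>
    rintro S T ⟨U, ⟨F, hF, hinj, hU1, hU2⟩, hr⟩ h
    by_cases hWS : W ⊆ S.1
    · rw [Finset.inter_eq_right.2 hWS]
      omega
    obtain ⟨x, hxW, hxS⟩ := Finset.not_subset.1 hWS
    have h1 := ih U T hr h
    have hfst : F.image Prod.fst ⊆ (S.1 ∩ W) \ S.2 := by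
      intro v hv
      obtain ⟨p, hp, rfl⟩ := Finset.mem_image.1 hv
      obtain ⟨ha, hb, hc, -⟩ := hF p hp
      have : p.1 ∈ W := by
        by_contra hn
        exact hxS (hc x (hW _ hn x hxW))
      simp [ha, hb, this]
    have hcard : (F.image Prod.fst).card = F.card := by
      apply Finset.card_image_of_injOn
      intro p hp q hq hpq
      by_contra hne
      exact (hinj p hp q hq hne).1 hpq
    have hf : F.card ≤ ((S.1 ∩ W) \ S.2).card := hcard ▸ Finset.card_le_card hfst
    have hsnd : (F.image Prod.snd).card ≤ F.card := Finset.card_image_le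
    have hblue : (U.1 ∩ W).card ≤ (S.1 ∩ W).card + F.card := by
      have : U.1 ∩ W ⊆ (S.1 ∩ W) ∪ F.image Prod.snd := by
        rw [hU1]; grind
      have := (Finset.card_le_card this).trans (Finset.card_union_le _ _)
      omega
    have hact : ((U.1 ∩ W) \ U.2).card ≤ ((S.1 ∩ W) \ S.2).card := by
      have : (U.1 ∩ W) \ U.2 ⊆
          (((S.1 ∩ W) \ S.2) \ F.image Prod.fst) ∪ F.image Prod.snd := by
        rw [hU1, hU2]; grind
      have := (Finset.card_le_card this).trans (Finset.card_union_le _ _)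
      rw [Finset.card_sdiff_of_subset hfst] at this
      omega
    have := Nat.mul_le_mul_left n hact
    rw [Nat.succ_mul]
    omega

/-- Let `W` and `W'` be disjoint sets, each completely joined to its complement. If both have a
white vertex, then every vertex has a white neighbor and no force is ever possible. -/
lemma not_univ_of_reach {W W' : Finset V} (hW : ∀ v, v ∉ W → ∀ w ∈ W, G.Adj v w)
    (hW' : ∀ v, v ∉ W' → ∀ w ∈ W', G.Adj v w) (hd : Disjoint W W') (n : ℕ) :
    ∀ S T : Finset V × Finset V, Reach G n S T → ¬ W ⊆ S.1 → ¬ W' ⊆ S.1 → ¬ W ⊆ T.1 := by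
  induction n with
  | zero =>
    rintro S T rfl h _
    exact h
  | succ n ih =>
    rintro S T ⟨U, ⟨F, hF, -, hU1, -⟩, hr⟩ h h'
    have hFe : F = ∅ := by
      refine Finset.eq_empty_of_forall_notMem fun p hp => ?_
      obtain ⟨-, -, hc, -⟩ := hF p hp
      by_cases hp1 : p.1 ∈ W
      · exact h' fun w hw => hc w (hW' _ (Finset.disjoint_left.1 hd hp1) w hw)
      · exact h fun w hw => hc w (hW _ hp1 w hw)
    have hUS : U.1 = S.1 := by simp [hU1, hFe]
    exact ih U T hr (hUS ▸ h) (hUS ▸ h')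

end General

/-! ### The two parts of `K_{s,t}` and the chain strategy -/

section Bipartite

variable {s t : ℕ}

/-- The part of size `s` of `K_{s,t}`. -/
def leftPart (s t : ℕ) : Finset (Fin s ⊕ Fin t) := Finset.univ.map Function.Embedding.inl

/-- The part of size `t` of `K_{s,t}`. -/
def rightPart (s t : ℕ) : Finset (Fin s ⊕ Fin t) := Finset.univ.map Function.Embedding.inr

lemma adj_leftPart (v) (hv : v ∉ leftPart s t) (w) (hw : w ∈ leftPart s t) :
    (completeBipartiteGraph (Fin s) (Fin t)).Adj v w := by
  rcases v with v | v <;> rcases w with w | w <;> simp_all [leftPart]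

lemma adj_rightPart (v) (hv : v ∉ rightPart s t) (w) (hw : w ∈ rightPart s t) :
    (completeBipartiteGraph (Fin s) (Fin t)).Adj v w := by
  rcases v with v | v <;> rcases w with w | w <;> simp_all [rightPart]

lemma disjoint_parts : Disjoint (leftPart s t) (rightPart s t) := by
  rw [Finset.disjoint_left]
  rintro (v | v) <;> simp [leftPart, rightPart]

lemma card_eq_parts (B : Finset (Fin s ⊕ Fin t)) :
    B.card = (B ∩ leftPart s t).card + (B ∩ rightPart s t).card := by
  rw [← Finset.card_union_of_disjoint, ← Finset.inter_union_distrib_left]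
  · congr 1
    ext v
    rcases v with v | v <;> simp [leftPart, rightPart]
  · exact disjoint_parts.mono Finset.inter_subset_right Finset.inter_subset_right

/-- The state after `j` rounds when the left part and the first `k` vertices of the right part
are blue at the start and each right vertex `i` forces `i + k` as soon as it is active. -/
def chainState (s t k j : ℕ) : Finset (Fin s ⊕ Fin t) × Finset (Fin s ⊕ Fin t) :=
  (Finset.univ.filter fun v => ∀ i : Fin t, v = Sum.inr i → (i : ℕ) < k * (j + 1),
   Finset.univ.filter fun v => ∃ i : Fin t, v = Sum.inr i ∧ (i : ℕ) < k * j ∧ (i : ℕ) + k < t)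

lemma round_chainState (s t k j : ℕ) :
    Round (completeBipartiteGraph (Fin s) (Fin t)) (chainState s t k j)
      (chainState s t k (j + 1)) := by
  have e1 : k * (j + 1) = k * j + k := by ring
  have e2 : k * (j + 1 + 1) = k * j + k + k := by ring
  classical
  refine ⟨Finset.univ.filter fun p => ∃ i i' : Fin t, p = (Sum.inr i, Sum.inr i') ∧
    k * j ≤ (i : ℕ) ∧ (i : ℕ) < k * j + k ∧ (i' : ℕ) = i + k, ?_, ?_, ?_, ?_⟩
  · intro p hp
    obtain ⟨i, i', rfl, h1, h2, h3⟩ := (Finset.mem_filter.1 hp).2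
    refine ⟨?_, ?_, ?_, ?_⟩
    · simp [chainState, e1, h2]
    · simp [chainState]; omega
    · rintro (w | w) <;> simp [chainState]
    · simp [chainState, e1, h3]; omega
  · intro p hp q hq hne
    obtain ⟨i, i', rfl, h1, h2, h3⟩ := (Finset.mem_filter.1 hp).2
    obtain ⟨a, a', rfl, g1, g2, g3⟩ := (Finset.mem_filter.1 hq).2
    simp only [ne_eq, Prod.mk.injEq, Sum.inr.injEq, Fin.ext_iff] at hne ⊢
    omega
  · ext v
    rcases v with v | v
    · simp [chainState]
    · simp only [chainState, Finset.mem_union, Finset.mem_filter, Finset.mem_univ, true_and,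
        Finset.mem_image, Sum.inr.injEq, forall_eq', e1, e2]
      constructor
      · intro h
        by_cases hv : (v : ℕ) < k * j + k
        · exact Or.inl hv
        · refine Or.inr ⟨_, ⟨⟨v - k, by omega⟩, v, rfl, ?_, ?_, ?_⟩, rfl⟩ <;> dsimp only <;> omega
      · rintro (h | ⟨p, ⟨i, i', rfl, h1, h2, h3⟩, h⟩)
        · omega
        · obtain rfl := Sum.inr.inj h
          omega
  · ext v
    rcases v with v | v
    · simp [chainState]
    · simp only [chainState, Finset.mem_union, Finset.mem_filter, Finset.mem_univ, true_and,
        Finset.mem_image, Sum.inr.injEq, exists_eq_left', e1]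
      constructor
      · rintro ⟨h, h'⟩
        by_cases hv : (v : ℕ) < k * j
        · exact Or.inl ⟨hv, h'⟩
        · exact Or.inr ⟨_, ⟨v, ⟨v + k, h'⟩, rfl, by omega, h, rfl⟩, rfl⟩
      · rintro (h | ⟨p, ⟨i, i', rfl, h1, h2, h3⟩, h⟩)
        · omega
        · obtain rfl := Sum.inr.inj h
          omega

lemma reach_chainState (s t k n : ℕ) : ∀ j,
    Reach (completeBipartiteGraph (Fin s) (Fin t)) n (chainState s t k j)
      (chainState s t k (j + n)) := by
  induction n with
  | zero => intro j; rfl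
  | succ n ih =>
    intro j
    refine ⟨_, round_chainState s t k j, ?_⟩
    have := ih (j + 1)
    rwa [add_right_comm, add_assoc] at this

lemma card_chainState_le (s t k : ℕ) : (chainState s t k 0).1.card ≤ s + k := by
  rw [card_eq_parts]
  have h1 : ((chainState s t k 0).1 ∩ leftPart s t).card ≤ s := by
    refine (Finset.card_le_card Finset.inter_subset_right).trans ?_
    simp [leftPart]
  have h2 : ((chainState s t k 0).1 ∩ rightPart s t).card ≤ k := by
    calc _ ≤ (Finset.range k).card := by
          apply Finset.card_le_card_of_injOn (Sum.elim (fun _ => 0) (fun i => (i : ℕ)) : Fin s ⊕ Fin t → ℕ)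
          · rintro (v | v) <;> simp [chainState, rightPart]
          · rintro (v | v) hv (w | w) hw <;> simp_all [rightPart, Fin.ext_iff]
      _ = k := Finset.card_range k
  omega

/-- The upper bound given by `chainState` with parameter `k`, run for `p` rounds. -/
lemma throttling_le {k p : ℕ} (h : t ≤ k * (p + 1)) :
    throttling (completeBipartiteGraph (Fin s) (Fin t)) ≤ ((s + k + p : ℕ) : ℕ∞) := by
  refine iInf_le_of_le (chainState s t k 0).1 ?_
  have h0 : chainState s t k 0 = ((chainState s t k 0).1, ∅) := by simp [chainState]
  have hr := reach_chainState s t k p 0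
  rw [h0] at hr
  have hp : propTime (completeBipartiteGraph (Fin s) (Fin t)) (chainState s t k 0).1 ≤ p := by
    refine sInf_le ⟨p, rfl, _, hr, ?_⟩
    rw [zero_add]
    refine Finset.filter_true_of_mem fun v _ i _ => i.2.trans_le h
  calc _ ≤ ((s + k : ℕ) : ℕ∞) + (p : ℕ∞) :=
        add_le_add (by exact_mod_cast card_chainState_le s t k) hp
    _ = _ := by push_cast; rfl

end Bipartite

/-! ### The lower bound -/

/-- AM-GM applied to `k` and `p + 1`. -/
lemma two_sqrt_le {m k p : ℕ} (h : m ≤ k + p * k) :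
    2 * Real.sqrt (m : ℝ) ≤ k + p + 1 := by
  have h' : (m : ℝ) ≤ k + p * k := by exact_mod_cast h
  have : Real.sqrt m ≤ ((k + p + 1 : ℝ)) / 2 := by
    apply Real.sqrt_le_iff.2
    constructor
    · positivity
    · nlinarith [sq_nonneg ((k : ℝ) - (p + 1))]
  linarith

/-- The lower bound: a set `B` that turns everything blue in `p` rounds contains one of the two
parts, and the counting bound applies to the other one. -/
lemma le_card_add {s t : ℕ} (hst : s ≤ t) {B : Finset (Fin s ⊕ Fin t)} {p : ℕ}
    {T : Finset (Fin s ⊕ Fin t) × Finset (Fin s ⊕ Fin t)}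
    (hr : Reach (completeBipartiteGraph (Fin s) (Fin t)) p (B, ∅) T) (hT : T.1 = Finset.univ) :
    2 * Real.sqrt (t : ℝ) + (s : ℝ) - 1 ≤ ((B.card + p : ℕ) : ℝ) := by
  have hcl : (leftPart s t).card = s := by simp [leftPart]
  have hcr : (rightPart s t).card = t := by simp [rightPart]
  have hB := card_eq_parts B
  by_cases hl : leftPart s t ⊆ B
  · have h := card_le_of_reach adj_rightPart p _ _ hr (by simp [hT])
    simp only [Finset.sdiff_empty, hcr] at h
    rw [Finset.inter_eq_right.2 hl, hcl] at hB
    have := two_sqrt_le h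
    rw [hB]
    push_cast
    linarith
  by_cases hR : rightPart s t ⊆ B
  · have h := card_le_of_reach adj_leftPart p _ _ hr (by simp [hT])
    simp only [Finset.sdiff_empty, hcl] at h
    rw [Finset.inter_eq_right.2 hR, hcr] at hB
    have h2 := two_sqrt_le h
    -- an empty left part would be contained in `B`
    have hs : 1 ≤ s := by
      by_contra h0
      have : leftPart s t = ∅ := Finset.card_eq_zero.1 (by omega)
      exact hl (by simp [this])
    have hs1 : 1 ≤ Real.sqrt s := Real.one_le_sqrt.2 (by exact_mod_cast hs)
    have hst' : Real.sqrt s ≤ Real.sqrt t := Real.sqrt_le_sqrt (by exact_mod_cast hst)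
    have es := Real.sq_sqrt (Nat.cast_nonneg (α := ℝ) s)
    have et := Real.sq_sqrt (Nat.cast_nonneg (α := ℝ) t)
    rw [hB]
    push_cast
    -- `(√t - 1)² ≥ (√s - 1)²`
    nlinarith [mul_nonneg (sub_nonneg.2 hst')
      (by linarith : (0 : ℝ) ≤ Real.sqrt t + Real.sqrt s - 2)]
  · exact absurd (by simp [hT])
      (not_univ_of_reach adj_leftPart adj_rightPart disjoint_parts p _ _ hr hl hR)

end Hopping

/-- For all `0 ≤ s ≤ t` with `t ≥ 1`, the complete bipartite graph `K_{s,t}`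
has hopping throttling number `⌈2√t + s - 1⌉`. -/
theorem hoppingThrottling_completeBipartite (s t : ℕ) (hst : s ≤ t) (ht : 1 ≤ t) :
    Hopping.throttling (completeBipartiteGraph (Fin s) (Fin t)) =
      (⌈2 * Real.sqrt (t : ℝ) + (s : ℝ) - 1⌉₊ : ℕ∞) := by
  apply le_antisymm
  · have ht1 : 1 ≤ Real.sqrt t := Real.one_le_sqrt.2 (by exact_mod_cast ht)
    obtain ⟨n, hn⟩ : ∃ n, n = ⌈2 * Real.sqrt (t : ℝ)⌉₊ := ⟨_, rfl⟩
    have hle : 2 * Real.sqrt (t : ℝ) ≤ n := hn ▸ Nat.le_ceil _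
    have hn2 : 2 ≤ n := by
      have : (2 : ℝ) ≤ n := by linarith
      exact_mod_cast this
    have h4 : 4 * t ≤ n * n := by
      have et := Real.sq_sqrt (Nat.cast_nonneg (α := ℝ) t)
      have : (4 * t : ℝ) ≤ n * n := by nlinarith
      exact_mod_cast this
    have hk : t ≤ n / 2 * (n - n / 2 - 1 + 1) := by
      rcases Nat.even_or_odd' n with ⟨c, hc | hc⟩
      · have e1 : n / 2 = c := by omega
        have e2 : n - c - 1 + 1 = c := by omega
        rw [e1, e2]
        subst hc
        nlinarith
      · have e1 : n / 2 = c := by omega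
        have e2 : n - c - 1 + 1 = c + 1 := by omega
        rw [e1, e2]
        subst hc
        -- `4t ≤ 4c(c+1) + 1` gives `t ≤ c(c+1)` by integrality
        have : (2 * c + 1) * (2 * c + 1) = 4 * (c * (c + 1)) + 1 := by ring
        omega
    refine (Hopping.throttling_le hk).trans ?_
    have hceil : s + n / 2 + (n - n / 2 - 1) ≤ ⌈2 * Real.sqrt (t : ℝ) + (s : ℝ) - 1⌉₊ := by
      have h := Nat.le_ceil (2 * Real.sqrt (t : ℝ) + (s : ℝ) - 1)
      by_contra hlt
      have hlt' : ⌈2 * Real.sqrt (t : ℝ) + (s : ℝ) - 1⌉₊ + 2 ≤ s + n := by omega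
      have hlt'' : ((⌈2 * Real.sqrt (t : ℝ) + (s : ℝ) - 1⌉₊ : ℕ) : ℝ) + 2 ≤ s + n := by
        exact_mod_cast hlt'
      have := Nat.ceil_lt_add_one (a := 2 * Real.sqrt (t : ℝ)) (by positivity)
      rw [← hn] at this
      linarith
    exact_mod_cast hceil
  · refine le_iInf fun B => ?_
    rcases Set.eq_empty_or_nonempty {q : ℕ∞ | ∃ t' : ℕ, q = (t' : ℕ∞) ∧
      ∃ T, Hopping.Reach (completeBipartiteGraph (Fin s) (Fin t)) t' (B, ∅) T ∧
        T.1 = Finset.univ} with he | hne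
    · rw [Hopping.propTime, he, sInf_empty, add_top]
      exact le_top
    · obtain ⟨p, hp, T, hr, hT⟩ := csInf_mem hne
      rw [Hopping.propTime, hp]
      have := Nat.ceil_le.2 (Hopping.le_card_add hst hr hT)
      exact_mod_cast this
end

section
/- For every integer m ≥ 2, the degree-3 spider G = S(3m² − 1, 3m², 3m² + 1), a tree on n = 9m² + 1 vertices, satisfies th_H(G) > 6m = ⌈2·√(n − 1)⌉; in particular, G does not attain the lower bound ⌈2·√(n − κ) + κ − 1⌉ with κ = 1. -/
/-- The non-symmetrized adjacency relation of the degree-3 spider `S(a,b,c)`: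
`none` is the center, adjacent to the first vertex of each of the three legs,
and consecutive vertices within a leg are adjacent. -/
def spiderRel (a b c : ℕ) :
    Option (Fin a ⊕ Fin b ⊕ Fin c) → Option (Fin a ⊕ Fin b ⊕ Fin c) → Prop
  | none, some (Sum.inl j) => (j : ℕ) = 0
  | none, some (Sum.inr (Sum.inl j)) => (j : ℕ) = 0
  | none, some (Sum.inr (Sum.inr j)) => (j : ℕ) = 0
  | some (Sum.inl j), some (Sum.inl k) => (j : ℕ) + 1 = (k : ℕ)
  | some (Sum.inr (Sum.inl j)), some (Sum.inr (Sum.inl k)) => (j : ℕ) + 1 = (k : ℕ)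
  | some (Sum.inr (Sum.inr j)), some (Sum.inr (Sum.inr k)) => (j : ℕ) + 1 = (k : ℕ)
  | _, _ => False

/-- The degree-3 spider `S(a,b,c)`: a tree consisting of a center vertex joined
to one endpoint of each of three vertex-disjoint paths (legs) containing `a`,
`b`, and `c` vertices respectively. -/
def spider (a b c : ℕ) : SimpleGraph (Option (Fin a ⊕ Fin b ⊕ Fin c)) :=
  SimpleGraph.fromRel (spiderRel a b c)

/-! ### Counting the forces of a round -/

namespace Hopping

variable {V : Type*} [DecidableEq V] [Fintype V]

/-- The blue vertices, for the blue set `S`, that have a white neighbor. -/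
noncomputable def boundary (G : SimpleGraph V) (S : Finset V) : Finset V := by
  classical exact S.filter fun v => ∃ w, G.Adj v w ∧ w ∉ S

theorem mem_boundary {G : SimpleGraph V} {S : Finset V} {v : V} :
    v ∈ boundary G S ↔ v ∈ S ∧ ∃ w, G.Adj v w ∧ w ∉ S := by
  classical exact Finset.mem_filter

/-- The invariant of the game started with `k` blue vertices: vertices that have forced are blue
with blue neighborhoods, and exactly `k` blue vertices have not forced yet. -/
def Inv (G : SimpleGraph V) (k : ℕ) (S : Finset V × Finset V) : Prop :=
  S.2 ⊆ S.1 ∧ (∀ u ∈ S.2, ∀ w, G.Adj u w → w ∈ S.1) ∧ S.1.card = S.2.card + k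

/-- Boundary vertices are unused and cannot force, so a round performs at most
`k - |∂S|` forces. -/
theorem Inv.round {G : SimpleGraph V} {k : ℕ} {S T : Finset V × Finset V}
    (hS : Inv G k S) (h : Round G S T) :
    Inv G k T ∧ T.1.card + (boundary G S.1).card ≤ S.1.card + k := by
  classical
  obtain ⟨F, h1, h2, hT1, hT2⟩ := h
  obtain ⟨i1, i2, i3⟩ := hS
  have c1 : (F.image Prod.fst).card = F.card := Finset.card_image_of_injOn fun p hp q hq e => by
    by_contra hne
    exact (h2 p hp q hq hne).1 e
  have c2 : (F.image Prod.snd).card = F.card := Finset.card_image_of_injOn fun p hp q hq e => by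
    by_contra hne
    exact (h2 p hp q hq hne).2 e
  have d1 : Disjoint S.1 (F.image Prod.snd) := by
    rw [Finset.disjoint_right]
    intro x hx
    obtain ⟨p, hp, rfl⟩ := Finset.mem_image.1 hx
    exact (h1 p hp).2.2.2
  have d2 : Disjoint S.2 (F.image Prod.fst) := by
    rw [Finset.disjoint_right]
    intro x hx
    obtain ⟨p, hp, rfl⟩ := Finset.mem_image.1 hx
    exact (h1 p hp).2.1
  have e1 : T.1.card = S.1.card + F.card := by
    rw [hT1, Finset.card_union_of_disjoint d1, c2]
  have e2 : T.2.card = S.2.card + F.card := by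
    rw [hT2, Finset.card_union_of_disjoint d2, c1]
  have d3 : Disjoint T.2 (boundary G S.1) := by
    rw [Finset.disjoint_right]
    intro x hx hx2
    obtain ⟨_, w, hw, hw2⟩ := mem_boundary.1 hx
    rw [hT2, Finset.mem_union] at hx2
    rcases hx2 with hx2 | hx2
    · exact hw2 (i2 x hx2 w hw)
    · obtain ⟨p, hp, rfl⟩ := Finset.mem_image.1 hx2
      exact hw2 ((h1 p hp).2.2.1 w hw)
  have s1 : T.2 ⊆ S.1 := by
    rw [hT2]
    refine Finset.union_subset i1 fun x hx => ?_
    obtain ⟨p, hp, rfl⟩ := Finset.mem_image.1 hx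
    exact (h1 p hp).1
  have s2 : S.1 ⊆ T.1 := hT1 ▸ Finset.subset_union_left
  have s3 : T.2 ∪ boundary G S.1 ⊆ S.1 :=
    Finset.union_subset s1 (Finset.filter_subset _ _)
  have e3 := Finset.card_le_card s3
  rw [Finset.card_union_of_disjoint d3] at e3
  refine ⟨⟨s1.trans s2, ?_, by omega⟩, by omega⟩
  intro u hu w hw
  rw [hT2, Finset.mem_union] at hu
  rcases hu with hu | hu
  · exact s2 (i2 u hu w hw)
  · obtain ⟨p, hp, rfl⟩ := Finset.mem_image.1 hu
    exact s2 ((h1 p hp).2.2.1 w hw)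

/-- If every set of vertices other than `∅` and `univ` has a boundary vertex, then each round
performs at most `k - 1` forces. -/
theorem Inv.reach {G : SimpleGraph V} {k : ℕ} (hk : 1 ≤ k)
    (hG : ∀ S : Finset V, S.Nonempty → S ≠ Finset.univ → 1 ≤ (boundary G S).card) (t : ℕ) :
    ∀ {S T : Finset V × Finset V}, Inv G k S → Reach G t S T →
      Inv G k T ∧ T.1.card ≤ S.1.card + t * (k - 1) := by
  induction t with
  | zero =>
    rintro S T hS rfl
    exact ⟨hS, by simp⟩
  | succ t ih =>
    rintro S T hS ⟨U, hU, hT⟩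
    obtain ⟨iU, cU⟩ := hS.round hU
    obtain ⟨iT, cT⟩ := ih iU hT
    refine ⟨iT, ?_⟩
    rw [add_one_mul]
    by_cases hu : S.1 = Finset.univ
    · have : T.1.card ≤ S.1.card := by
        rw [hu]
        exact Finset.card_le_univ _
      omega
    · have hne : S.1.Nonempty := by
        rw [← Finset.card_pos, hS.2.2]
        omega
      have := hG _ hne hu
      omega

theorem Reach.split {W : Type*} [DecidableEq W] {G : SimpleGraph W} (i j : ℕ) :
    ∀ {S T : Finset W × Finset W},
    Reach G (i + j) S T → ∃ U, Reach G i S U ∧ Reach G j U T := by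
  induction i with
  | zero =>
    intro S T h
    rw [Nat.zero_add] at h
    exact ⟨S, rfl, h⟩
  | succ i ih =>
    intro S T h
    rw [Nat.add_right_comm] at h
    obtain ⟨U, hU, hT⟩ := h
    obtain ⟨W, hW, hT⟩ := ih hT
    exact ⟨W, ⟨U, hU, hW⟩, hT⟩

end Hopping

/-! ### Vertex sets of the spider with at most one boundary vertex -/

theorem fin_const {n : ℕ} {p : Fin n → Prop}
    (h : ∀ j k : Fin n, (j : ℕ) + 1 = k → (p j ↔ p k)) (hn : 0 < n) (j : Fin n) :
    p j ↔ p ⟨0, hn⟩ := by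
  obtain ⟨j, hj⟩ := j
  induction j with
  | zero => rfl
  | succ j ih =>
    rw [← ih (by omega)]
    exact (h ⟨j, by omega⟩ ⟨j + 1, hj⟩ rfl).symm

/-- A leg with no color change inside it is entirely of the color of its first vertex. -/
theorem leg_card {n : ℕ} {p : Fin n → Prop} [DecidablePred p]
    (h : ∀ j k : Fin n, (j : ℕ) + 1 = k → (p j ↔ p k)) (hn : 0 < n) :
    (p ⟨0, hn⟩ ∧ ∑ j, (if p j then 1 else 0) = n) ∨
      (¬ p ⟨0, hn⟩ ∧ ∑ j, (if p j then 1 else 0) = 0) := by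
  by_cases h0 : p ⟨0, hn⟩
  · left
    have : ∀ j, p j := fun j => (fin_const h hn j).2 h0
    simp [this]
  · right
    have : ∀ j, ¬ p j := fun j hj => h0 ((fin_const h hn j).1 hj)
    simp [this]

/-- If every edge between blue and white vertices is incident with the vertex `b`, then the number
of blue vertices is not strictly between the size of a leg and the size of two legs; the margins
are those needed for legs of lengths `q - 1`, `q`, `q + 1`. -/
theorem spider_no_cut {q : ℕ} (hq : 2 ≤ q)
    (S : Finset (Option (Fin (q - 1) ⊕ Fin q ⊕ Fin (q + 1))))
    (b : Option (Fin (q - 1) ⊕ Fin q ⊕ Fin (q + 1)))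
    (hb : ∀ v w, (spider (q - 1) q (q + 1)).Adj v w → v ≠ b → w ≠ b → (v ∈ S ↔ w ∈ S))
    (h1 : q + 2 < S.card) (h2 : S.card < 2 * q - 1) : False := by
  have hc : S.card = ∑ v, if v ∈ S then 1 else 0 := by simp
  simp only [Fintype.sum_option, Fintype.sum_sum_type] at hc
  have B1 : ∑ j : Fin (q - 1), (if some (Sum.inl j) ∈ S then 1 else 0) ≤ q - 1 :=
    (Finset.sum_le_card_nsmul _ _ 1 (by intros; split_ifs <;> simp)).trans (by simp)
  have B2 : ∑ j : Fin q, (if some (Sum.inr (Sum.inl j)) ∈ S then 1 else 0) ≤ q :=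
    (Finset.sum_le_card_nsmul _ _ 1 (by intros; split_ifs <;> simp)).trans (by simp)
  have B3 : ∑ j : Fin (q + 1), (if some (Sum.inr (Sum.inr j)) ∈ S then 1 else 0) ≤ q + 1 :=
    (Finset.sum_le_card_nsmul _ _ 1 (by intros; split_ifs <;> simp)).trans (by simp)
  have L1 : (∀ j, b ≠ some (Sum.inl j)) → _ := fun hx =>
    leg_card (p := fun j : Fin (q - 1) => some (Sum.inl j) ∈ S) (fun j k hjk =>
      hb _ _ (by simp [spider, spiderRel, SimpleGraph.fromRel_adj, hjk, Fin.ext_iff]; omega)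
        (hx j).symm (hx k).symm) (by omega)
  have L2 : (∀ j, b ≠ some (Sum.inr (Sum.inl j))) → _ := fun hx =>
    leg_card (p := fun j : Fin q => some (Sum.inr (Sum.inl j)) ∈ S) (fun j k hjk =>
      hb _ _ (by simp [spider, spiderRel, SimpleGraph.fromRel_adj, hjk, Fin.ext_iff]; omega)
        (hx j).symm (hx k).symm) (by omega)
  have L3 : (∀ j, b ≠ some (Sum.inr (Sum.inr j))) → _ := fun hx =>
    leg_card (p := fun j : Fin (q + 1) => some (Sum.inr (Sum.inr j)) ∈ S) (fun j k hjk =>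
      hb _ _ (by simp [spider, spiderRel, SimpleGraph.fromRel_adj, hjk, Fin.ext_iff]; omega)
        (hx j).symm (hx k).symm) (by omega)
  have C1 : none ≠ b → some (Sum.inl ⟨0, by omega⟩) ≠ b → _ := hb none (some (Sum.inl ⟨0, by omega⟩))
    (by simp [spider, spiderRel, SimpleGraph.fromRel_adj])
  have C2 : none ≠ b → some (Sum.inr (Sum.inl ⟨0, by omega⟩)) ≠ b → _ :=
    hb none (some (Sum.inr (Sum.inl ⟨0, by omega⟩)))
    (by simp [spider, spiderRel, SimpleGraph.fromRel_adj])
  have C3 : none ≠ b → some (Sum.inr (Sum.inr ⟨0, by omega⟩)) ≠ b → _ :=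
    hb none (some (Sum.inr (Sum.inr ⟨0, by omega⟩)))
    (by simp [spider, spiderRel, SimpleGraph.fromRel_adj])
  rcases b with _ | j | j | j
  · have l1 := L1 (by simp)
    have l2 := L2 (by simp)
    have l3 := L3 (by simp)
    clear L1 L2 L3 C1 C2 C3
    split_ifs at hc <;> omega
  · have l2 := L2 (by simp)
    have l3 := L3 (by simp)
    have c2 := C2 (by simp) (by simp)
    have c3 := C3 (by simp) (by simp)
    clear L1 L2 L3 C1 C2 C3
    split_ifs at hc with hn <;> simp only [hn, true_iff, false_iff] at c2 c3 <;>
      simp only [c2, c3, true_and, false_and, not_true, not_false_iff, or_false, false_or] at l2 l3 <;> omega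
  · have l2 := L1 (by simp)
    have l3 := L3 (by simp)
    have c2 := C1 (by simp) (by simp)
    have c3 := C3 (by simp) (by simp)
    clear L1 L2 L3 C1 C2 C3
    split_ifs at hc with hn <;> simp only [hn, true_iff, false_iff] at c2 c3 <;>
      simp only [c2, c3, true_and, false_and, not_true, not_false_iff, or_false, false_or] at l2 l3 <;> omega
  · have l2 := L1 (by simp)
    have l3 := L2 (by simp)
    have c2 := C1 (by simp) (by simp)
    have c3 := C2 (by simp) (by simp)
    clear L1 L2 L3 C1 C2 C3
    split_ifs at hc with hn <;> simp only [hn, true_iff, false_iff] at c2 c3 <;>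
      simp only [c2, c3, true_and, false_and, not_true, not_false_iff, or_false, false_or] at l2 l3 <;> omega

/-- Connectedness of the spider, in terms of boundaries. -/
theorem spider_boundary {a b c : ℕ} (S : Finset (Option (Fin a ⊕ Fin b ⊕ Fin c)))
    (hne : S.Nonempty) (hu : S ≠ Finset.univ) :
    1 ≤ (Hopping.boundary (spider a b c) S).card := by
  by_contra hlt
  have h0 : Hopping.boundary (spider a b c) S = ∅ := by
    rw [← Finset.card_eq_zero]
    omega
  have hcl : ∀ v w, (spider a b c).Adj v w → v ∈ S → w ∈ S := by
    intro v w hvw hv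
    by_contra hw
    have : v ∈ Hopping.boundary (spider a b c) S := Hopping.mem_boundary.2 ⟨hv, w, hvw, hw⟩
    simp [h0] at this
  have hcl' : ∀ v w, (spider a b c).Adj v w → (v ∈ S ↔ w ∈ S) := fun v w h =>
    ⟨hcl v w h, hcl w v h.symm⟩
  have key : ∀ v, v ∈ S ↔ none ∈ S := by
    rintro (_ | j | j | j)
    · rfl
    · rw [fin_const (p := fun j : Fin a => some (Sum.inl j) ∈ S) (fun j k hjk => hcl' _ _
        (by simp [spider, spiderRel, SimpleGraph.fromRel_adj, hjk, Fin.ext_iff]; omega))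
        (Fin.pos j) j]
      exact hcl' _ _ (by simp [spider, spiderRel, SimpleGraph.fromRel_adj])
    · rw [fin_const (p := fun j : Fin b => some (Sum.inr (Sum.inl j)) ∈ S) (fun j k hjk => hcl' _ _
        (by simp [spider, spiderRel, SimpleGraph.fromRel_adj, hjk, Fin.ext_iff]; omega))
        (Fin.pos j) j]
      exact hcl' _ _ (by simp [spider, spiderRel, SimpleGraph.fromRel_adj])
    · rw [fin_const (p := fun j : Fin c => some (Sum.inr (Sum.inr j)) ∈ S) (fun j k hjk => hcl' _ _
        (by simp [spider, spiderRel, SimpleGraph.fromRel_adj, hjk, Fin.ext_iff]; omega))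
        (Fin.pos j) j]
      exact hcl' _ _ (by simp [spider, spiderRel, SimpleGraph.fromRel_adj])
  obtain ⟨x, hx⟩ := hne
  exact hu (Finset.eq_univ_iff_forall.2 fun v => (key v).2 ((key x).1 hx))

/-! ### The lower bound -/

theorem spider_card {m : ℕ} (hm : 2 ≤ m) :
    Fintype.card (Option (Fin (3 * m ^ 2 - 1) ⊕ Fin (3 * m ^ 2) ⊕ Fin (3 * m ^ 2 + 1))) =
      9 * m ^ 2 + 1 := by
  have : 0 < m ^ 2 := by positivity
  simp only [Fintype.card_option, Fintype.card_sum, Fintype.card_fin]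
  omega

/-- Coloring everything blue in `t` rounds from `B` needs `|B| + t ≥ 6m + 1`. -/
theorem spider_lower {m : ℕ} (hm : 2 ≤ m)
    (B : Finset (Option (Fin (3 * m ^ 2 - 1) ⊕ Fin (3 * m ^ 2) ⊕ Fin (3 * m ^ 2 + 1)))) (t : ℕ)
    (T) (hR : Hopping.Reach (spider (3 * m ^ 2 - 1) (3 * m ^ 2) (3 * m ^ 2 + 1)) t (B, ∅) T)
    (hT : T.1 = Finset.univ) : 6 * m + 1 ≤ B.card + t := by
  by_contra hlt
  have hcard := spider_card hm
  obtain ⟨G, hG⟩ : ∃ G, G = spider (3 * m ^ 2 - 1) (3 * m ^ 2) (3 * m ^ 2 + 1) := ⟨_, rfl⟩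
  have hbd := fun S => spider_boundary (a := 3 * m ^ 2 - 1) (b := 3 * m ^ 2) (c := 3 * m ^ 2 + 1) S
  rw [← hG] at hR hbd
  have hTc : T.1.card = 9 * m ^ 2 + 1 := by rw [hT, Finset.card_univ, hcard]
  have hI : Hopping.Inv G B.card (B, ∅) := ⟨by simp, by simp, by simp⟩
  have hk : 1 ≤ B.card := by
    by_contra hk
    have hk0 : B.card = 0 := by omega
    -- For `k = 0`, `Inv.round` says that the number of blue vertices never grows.
    have : ∀ (t : ℕ) S, Hopping.Inv G 0 S → S.1.card = 0 → Hopping.Reach G t S T →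
        T.1.card = 0 := by
      intro t
      induction t with
      | zero => rintro S - h0 rfl; exact h0
      | succ t ih =>
        rintro S hS h0 ⟨U, hU, hT⟩
        obtain ⟨iU, cU⟩ := hS.round hU
        exact ih U iU (by omega) hT
    have := this t _ (hk0 ▸ hI) hk0 hR
    omega
  obtain ⟨k, hk'⟩ : ∃ k, B.card = k + 1 := ⟨B.card - 1, by omega⟩
  have tot := (hI.reach hk hbd t hR).2
  simp only [hk', Nat.add_sub_cancel] at tot
  -- Equality case of AM-GM: `9m² ≤ k (t + 1)` while `k + (t + 1) ≤ 6m`.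
  have hkm : k = 3 * m := by
    zify at *
    nlinarith [sq_nonneg ((k : ℤ) - 3 * m)]
  have htm : t + 1 = 3 * m := by
    subst hkm
    nlinarith
  -- Split the game into `m` rounds, one further round, and the remaining `r` rounds.
  obtain ⟨r, rfl⟩ : ∃ r, t = m + (1 + r) := ⟨t - m - 1, by omega⟩
  obtain ⟨U, hU, hUT⟩ := Hopping.Reach.split _ _ hR
  obtain ⟨W, ⟨W', hW, hWW⟩, hWT⟩ := Hopping.Reach.split _ _ hUT
  obtain rfl : W' = W := hWW
  obtain ⟨iU, cU⟩ := hI.reach hk hbd _ hU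
  obtain ⟨iW, cW⟩ := iU.round hW
  obtain ⟨-, cT⟩ := iW.reach hk hbd _ hWT
  simp only [hk', hkm, Nat.add_sub_cancel] at cU cW cT
  have hr : r = 2 * m - 2 := by omega
  have er : r * (3 * m) + 6 * m = 6 * m ^ 2 := by
    obtain ⟨s, rfl⟩ : ∃ s, m = s + 2 := ⟨m - 2, by omega⟩
    rw [hr, show 2 * (s + 2) - 2 = 2 * s + 2 by omega]
    ring
  have em : m * (3 * m) = 3 * m ^ 2 := by ring
  have hm2 : 2 * m ≤ m ^ 2 := by nlinarith
  rw [em] at cU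
  rw [← Finset.card_univ, ← hT] at hcard
  have hb1 : (Hopping.boundary G U.1).card ≤ 1 := by omega
  obtain ⟨b, hb⟩ := Finset.card_le_one_iff_subset_singleton.1 hb1
  have hcl : ∀ v w, G.Adj v w → v ≠ b → v ∈ U.1 → w ∈ U.1 := by
    intro v w hvw hvb hv
    by_contra hw
    exact hvb (Finset.mem_singleton.1 (hb (Hopping.mem_boundary.2 ⟨hv, w, hvw, hw⟩)))
  exact spider_no_cut (q := 3 * m ^ 2) (by omega) U.1 b
    (fun v w h hv hw => by rw [← hG] at h; exact ⟨hcl v w h hv, hcl w v h.symm hw⟩) (by omega) (by omega)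

/-- For every `m ≥ 2`, the degree-3 spider `S(3m² - 1, 3m², 3m² + 1)`, a tree on
`n = 9m² + 1` vertices, satisfies `th_H(G) > 6m = ⌈2√(n - 1)⌉`; in particular it
does not attain the lower bound `⌈2√(n - κ) + κ - 1⌉` with `κ = 1`. -/
theorem hoppingThrottling_spider_gt (m : ℕ) (hm : 2 ≤ m) :
    Fintype.card (Option (Fin (3 * m ^ 2 - 1) ⊕ Fin (3 * m ^ 2) ⊕ Fin (3 * m ^ 2 + 1))) =
        9 * m ^ 2 + 1 ∧
      6 * m = ⌈2 * Real.sqrt ((9 * m ^ 2 + 1 : ℝ) - 1)⌉₊ ∧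
      (6 * m : ℕ∞) < Hopping.throttling (spider (3 * m ^ 2 - 1) (3 * m ^ 2) (3 * m ^ 2 + 1)) := by
  refine ⟨spider_card hm, ?_, ?_⟩
  · have : (9 * m ^ 2 + 1 : ℝ) - 1 = (3 * m) ^ 2 := by ring
    rw [this, Real.sqrt_sq (by positivity), show (2 * (3 * m) : ℝ) = ((6 * m : ℕ) : ℝ) by
      push_cast; ring, Nat.ceil_natCast]
  · have key : ((6 * m + 1 : ℕ) : ℕ∞) ≤
        Hopping.throttling (spider (3 * m ^ 2 - 1) (3 * m ^ 2) (3 * m ^ 2 + 1)) := by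
      refine le_iInf fun B => ?_
      rw [← tsub_le_iff_left]
      refine le_sInf ?_
      rintro _ ⟨t, rfl, T, hR, hT⟩
      rw [tsub_le_iff_left]
      exact_mod_cast spider_lower hm B t T hR hT
    refine lt_of_lt_of_le ?_ key
    exact_mod_cast Nat.lt_succ_self (6 * m)
end
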